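/- arXiv:1307.4837 — 2 statements merged into one kernel-verified Lean document; each statement's English description precedes it below -/
import Mathlib

section
/- For positive integers p and q, if q = 1 or p = 1 then the group G(p;q) is isomorphic to the infinite cyclic group ℤ. -/
/-- The word `a_{p-1} a_{p-2} ⋯ a_0` in the free group on `Option ℤ`,
where `some k` stands for the generator `a k` and `none` stands for `ω`. -/
def omegaWord (p : ℕ) : FreeGroup (Option ℤ) :=
  ((List.range p).reverse.map (fun i => FreeGroup.of (some (i : ℤ)))).prod

/-- The relators of the group `G(p;q)`:
`ω = a_{p-1}⋯a_0`, `a_{k+q} = a_k` and `a_{k+p} = ω a_k ω⁻¹` for all `k ∈ ℤ`. -/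
def gRels (p q : ℕ) : Set (FreeGroup (Option ℤ)) :=
  {FreeGroup.of none * (omegaWord p)⁻¹} ∪
    (⋃ k : ℤ, {FreeGroup.of (some (k + (q : ℤ))) * (FreeGroup.of (some k))⁻¹}) ∪
    (⋃ k : ℤ, {FreeGroup.of (some (k + (p : ℤ))) *
      (FreeGroup.of none * FreeGroup.of (some k) * (FreeGroup.of none)⁻¹)⁻¹})

/-- The group `G(p;q)`. -/
abbrev Gpq (p q : ℕ) : Type := PresentedGroup (gRels p q)

/-!
In `G(p;q)` every generator `a_k` equals `a_0` as soon as `p = 1` or `q = 1`: for `q = 1` this is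
the periodicity relation, and for `p = 1` we have `ω = a_0`, so that
`a_k = a_0 ^ k * a_0 * a_0 ^ (-k) = a_0`. Since `ω` is a word in the `a_k`, the group is then
generated by `a_0`; the homomorphism to `ℤ` sending every `a_k` to `1` and `ω` to `p` respects the
relations and is the inverse of `n ↦ a_0 ^ n`.
-/

theorem apply_add_zsmul_of_apply_add_eq_conj {A G : Type*} [AddGroup A] [Group G] {f : A → G}
    {c : A} {g : G} (hf : ∀ x, f (x + c) = g * f x * g⁻¹) (x : A) (n : ℤ) :
    f (x + n • c) = g ^ n * f x * (g ^ n)⁻¹ := by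
  have untwisted : Function.Periodic (fun m : ℤ ↦ (g ^ m)⁻¹ * f (x + m • c) * g ^ m) 1 := fun m ↦ by
    simp only [add_one_zsmul, ← add_assoc, hf]
    group
  have key : (g ^ n)⁻¹ * f (x + n • c) * g ^ n = f x := by simpa using untwisted.int_mul_eq n
  rw [← key]
  group

/-- The descending product `f (n - 1) * ⋯ * f 1 * f 0`, the shape of the word defining `ω`. -/
def descProd {M : Type*} [Monoid M] (f : ℤ → M) (n : ℕ) : M :=
  ((List.range n).reverse.map fun i : ℕ ↦ f i).prod

@[simp]
theorem descProd_one {M : Type*} [Monoid M] (f : ℤ → M) : descProd f 1 = f 0 := by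
  simp [descProd]

theorem map_descProd {M N : Type*} [Monoid M] [Monoid N] (φ : M →* N) (f : ℤ → M) (n : ℕ) :
    φ (descProd f n) = descProd (φ ∘ f) n := by
  simp only [descProd, map_list_prod, List.map_map, Function.comp_def]

theorem omegaWord_eq_descProd (p : ℕ) :
    omegaWord p = descProd (fun k ↦ FreeGroup.of (some k)) p := by
  -- The range in `omegaWord` is cast to a list of integers through the list monad.
  simp [omegaWord, descProd, ← List.map_eq_flatMap, Function.comp_def]

namespace Gpq

/-- The generator `a_k` of `G(p;q)`. -/
def a (p q : ℕ) (k : ℤ) : Gpq p q := PresentedGroup.of (some k)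

/-- The generator `ω` of `G(p;q)`. -/
def ω (p q : ℕ) : Gpq p q := PresentedGroup.of none

section Relations

variable (p q : ℕ)

theorem ω_eq_descProd : ω p q = descProd (a p q) p := by
  have hω : ω p q = PresentedGroup.mk (gRels p q) (omegaWord p) :=
    PresentedGroup.mk_eq_mk_of_mul_inv_mem (.inl (.inl rfl))
  rw [hω, omegaWord_eq_descProd, map_descProd]
  rfl

theorem a_periodic : Function.Periodic (a p q) q := fun k ↦
  PresentedGroup.mk_eq_mk_of_mul_inv_mem (.inl (.inr (Set.mem_iUnion.2 ⟨k, rfl⟩)))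

theorem a_add_eq_conj (k : ℤ) : a p q (k + p) = ω p q * a p q k * (ω p q)⁻¹ :=
  PresentedGroup.mk_eq_mk_of_mul_inv_mem (.inr (Set.mem_iUnion.2 ⟨k, rfl⟩))

theorem a_one_right (k : ℤ) : a p 1 k = a p 1 0 := by
  simpa using (a_periodic p 1).int_mul_eq k

theorem a_one_left (k : ℤ) : a 1 q k = a 1 q 0 := by
  have hω : ω 1 q = a 1 q 0 := by rw [ω_eq_descProd, descProd_one]
  calc a 1 q k = ω 1 q ^ k * a 1 q 0 * (ω 1 q ^ k)⁻¹ := by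
        simpa using apply_add_zsmul_of_apply_add_eq_conj (a_add_eq_conj 1 q) 0 k
    _ = a 1 q 0 := by rw [hω, (Commute.zpow_self _ k).mul_inv_cancel]

end Relations

variable {p q : ℕ}

theorem hom_ext {H : Type*} [Group H] {φ ψ : Gpq p q →* H}
    (h : ∀ k, φ (a p q k) = ψ (a p q k)) : φ = ψ := by
  have hω : φ (ω p q) = ψ (ω p q) := by
    simp only [ω_eq_descProd, map_descProd, Function.comp_def, h]
  refine PresentedGroup.ext ?_
  rintro (_ | k)
  · exact hω
  · exact h k

/-- The universal property of `G(p;q)`: a family `f` satisfying the relations extends to a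
homomorphism `a_k ↦ f k`. The image of `ω` is not a parameter, since the first relation forces it
to be `descProd f p`. -/
def lift {H : Type*} [Group H] (f : ℤ → H) (hq : Function.Periodic f q)
    (hp : ∀ k, f (k + p) = descProd f p * f k * (descProd f p)⁻¹) : Gpq p q →* H :=
  PresentedGroup.toGroup (f := fun x ↦ x.elim (descProd f p) f) <| by
    rintro r ((hr | hr) | hr)
    · obtain rfl : r = _ := hr
      have hword : FreeGroup.lift (fun x : Option ℤ ↦ x.elim (descProd f p) f) (omegaWord p) =
          descProd f p := by
        simp only [omegaWord_eq_descProd, map_descProd, Function.comp_def,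
          FreeGroup.lift_apply_of, Option.elim_some]
      simp [hword]
    · obtain ⟨k, rfl⟩ := Set.mem_iUnion.1 hr
      simp [hq k]
    · obtain ⟨k, rfl⟩ := Set.mem_iUnion.1 hr
      simp [hp k]

@[simp]
theorem lift_a {H : Type*} [Group H] (f : ℤ → H) (hq : Function.Periodic f q)
    (hp : ∀ k, f (k + p) = descProd f p * f k * (descProd f p)⁻¹) (k : ℤ) :
    lift f hq hp (a p q k) = f k :=
  PresentedGroup.toGroup.of _

/-- The degree homomorphism `G(p;q) → ℤ`, sending every `a_k` to `1`. -/
def degree (p q : ℕ) : Gpq p q →* Multiplicative ℤ :=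
  lift (fun _ ↦ Multiplicative.ofAdd 1) (fun _ ↦ rfl) fun _ ↦ (mul_inv_cancel_comm _ _).symm

@[simp]
theorem degree_a (k : ℤ) : degree p q (a p q k) = Multiplicative.ofAdd 1 :=
  lift_a _ _ _ k

/-- If all the `a_k` coincide, then the degree identifies `G(p;q)` with `ℤ`. -/
def mulEquivInt (h : ∀ k, a p q k = a p q 0) : Gpq p q ≃* Multiplicative ℤ :=
  (degree p q).toMulEquiv (zpowersHom (Gpq p q) (a p q 0))
    (hom_ext fun k ↦ by simp [h k])
    (MonoidHom.ext_mint <| by simp)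

end Gpq

/-- If `q = 1` or `p = 1`, then `G(p;q)` is isomorphic to the infinite cyclic group `ℤ`. -/
theorem stmt_8 (p q : ℕ) (hp : 0 < p) (hq : 0 < q) (h : q = 1 ∨ p = 1) :
    Nonempty (Gpq p q ≃* Multiplicative ℤ) := by
  have a_eq : ∀ k, Gpq.a p q k = Gpq.a p q 0 := by
    rcases h with rfl | rfl
    · exact Gpq.a_one_right p
    · exact Gpq.a_one_left q
  exact ⟨Gpq.mulEquivInt a_eq⟩
end

section
/- Let q and r be positive integers such that q is even (so gcd(2,q) = 2) and gcd(q/2, r) = 1. Then the group G(2;q;r) is isomorphic to ℤ × ℤ/rℤ. -/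
/-- The relators of the group `G(p;q;r)`: those of `G(p;q)` together with `ω^r = e`. -/
def gRelsProj (p q r : ℕ) : Set (FreeGroup (Option ℤ)) :=
  gRels p q ∪ {(FreeGroup.of none) ^ r}

/-- The group `G(p;q;r)`, the quotient of `G(p;q)` by the relation `ω^r = e`. -/
abbrev Gpqr (p q r : ℕ) : Type := PresentedGroup (gRelsProj p q r)

/-!
Conjugation by `ω ^ m` shifts the index of `a_k` by `p * m`. When this is a multiple of `q`, the
power `ω ^ m` is central, and if `m` is coprime to `r` then so is `ω` itself. For `p = 2` and `q`
even we may take `m = q / 2`; centrality of `ω` then makes `a` a sequence of period `2`, so the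
group is abelian with generators `a_0` and `ω`, where `ω ^ r = 1` is the only relation left.
-/

theorem semiconjBy_pow_shift {ι M : Type*} [AddMonoid ι] [Monoid M] {a : ι → M} {w : M} {p : ι}
    (h : ∀ k, SemiconjBy w (a k) (a (k + p))) (n : ℕ) (k : ι) :
    SemiconjBy (w ^ n) (a k) (a (k + n • p)) := by
  induction n with
  | zero => simp
  | succ n ih =>
    rw [pow_succ', succ_nsmul, ← add_assoc]
    exact (h _).mul_left ih

theorem commute_of_coprime_of_commute_pow {M : Type*} [Monoid M] {w x : M} {m r : ℕ}
    (hmr : m.Coprime r) (hw : w ^ r = 1) (h : Commute (w ^ m) x) : Commute w x := by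
  obtain ⟨n, hn⟩ := exists_pow_eq_self_of_coprime
    (hmr.coprime_dvd_right (orderOf_dvd_of_pow_eq_one hw))
  exact hn ▸ h.pow_left n

theorem map_omegaWord {M : Type*} [Monoid M] (f : FreeGroup (Option ℤ) →* M) (p : ℕ) :
    f (omegaWord p) = ((List.range p).reverse.map fun i : ℕ => f (.of (some (i : ℤ)))).prod := by
  simp [omegaWord, map_list_prod, ← List.map_eq_flatMap, Function.comp_def]

section IntProdZMod

variable {G : Type*} [Group G] {r : ℕ} {x w : G}

/-- The homomorphism from the multiplicative form of `ℤ × ℤ/rℤ` that sends `(n, k)` to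
`x ^ n * w ^ k`, for commuting elements `x` and `w` with `w ^ r = 1`. -/
def intProdZModHom (hxw : Commute x w) (hw : w ^ r = 1) : Multiplicative (ℤ × ZMod r) →* G :=
  AddMonoidHom.toMultiplicativeLeft <|
    (zmultiplesHom (Additive G) (.ofMul x)).noncommCoprod
      (ZMod.lift r ⟨zmultiplesHom (Additive G) (.ofMul w), by simp [← ofMul_pow, hw]⟩) <| by
        intro n k
        obtain ⟨k, rfl⟩ := ZMod.intCast_surjective k
        rw [ZMod.lift_coe]
        exact hxw.zpow_zpow n k

theorem intProdZModHom_apply (hxw : Commute x w) (hw : w ^ r = 1) (n k : ℤ) :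
    intProdZModHom hxw hw (.ofAdd (n, (k : ZMod r))) = x ^ n * w ^ k := by
  simp [intProdZModHom]

end IntProdZMod

namespace Gpqr

variable {p q r : ℕ}

/-- The generator `a_k` of `G(p;q;r)`. -/
def gen (k : ℤ) : Gpqr p q r := PresentedGroup.of (some k)

/-- The generator `ω` of `G(p;q;r)`. -/
def omega : Gpqr p q r := PresentedGroup.of none

theorem omega_eq_prod :
    (omega : Gpqr p q r) = ((List.range p).reverse.map fun i : ℕ => gen (i : ℤ)).prod := by
  have h : (omega : Gpqr p q r) = PresentedGroup.mk _ (omegaWord p) :=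
    PresentedGroup.mk_eq_mk_of_mul_inv_mem (.inl (.inl (.inl rfl)))
  rw [h, map_omegaWord]
  rfl

theorem gen_periodic : Function.Periodic (gen : ℤ → Gpqr p q r) q := fun k =>
  PresentedGroup.mk_eq_mk_of_mul_inv_mem (.inl (.inl (.inr (Set.mem_iUnion.mpr ⟨k, rfl⟩))))

theorem semiconjBy_omega_gen (k : ℤ) :
    SemiconjBy (omega : Gpqr p q r) (gen k) (gen (k + p)) :=
  have h : (gen (k + p) : Gpqr p q r) = omega * gen k * omega⁻¹ :=
    PresentedGroup.mk_eq_mk_of_mul_inv_mem (.inl (.inr (Set.mem_iUnion.mpr ⟨k, rfl⟩)))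
  (eq_mul_inv_iff_mul_eq.mp h).symm

theorem omega_pow : (omega : Gpqr p q r) ^ r = 1 :=
  PresentedGroup.one_of_mem (.inr rfl)

section Lift

variable {H : Type*} [Group H] {a : ℤ → H} {w : H}

/-- The universal property of `G(p;q;r)`: a sequence `a` and an element `w` of `H` satisfying the
defining relations give a homomorphism sending `a_k` to `a k` and `ω` to `w`. -/
def lift (hprod : w = ((List.range p).reverse.map fun i : ℕ => a (i : ℤ)).prod)
    (hperiod : Function.Periodic a q) (hshift : ∀ k, SemiconjBy w (a k) (a (k + p)))
    (hpow : w ^ r = 1) : Gpqr p q r →* H :=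
  PresentedGroup.toGroup (f := fun o => o.elim w a) <| by
    rintro _ (((rfl | hx) | hx) | rfl)
    · simpa [map_omegaWord, mul_inv_eq_one] using hprod
    · obtain ⟨k, rfl⟩ := Set.mem_iUnion.mp hx
      simp [hperiod k]
    · obtain ⟨k, rfl⟩ := Set.mem_iUnion.mp hx
      rw [map_mul, map_inv, mul_inv_eq_one]
      simpa [eq_mul_inv_iff_mul_eq] using (hshift k).eq.symm
    · simpa using hpow

variable (hprod : w = ((List.range p).reverse.map fun i : ℕ => a (i : ℤ)).prod)
  (hperiod : Function.Periodic a q) (hshift : ∀ k, SemiconjBy w (a k) (a (k + p)))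
  (hpow : w ^ r = 1)

@[simp]
theorem lift_gen (k : ℤ) : lift hprod hperiod hshift hpow (gen k) = a k :=
  PresentedGroup.toGroup.of _

@[simp]
theorem lift_omega : lift hprod hperiod hshift hpow omega = w :=
  PresentedGroup.toGroup.of _

end Lift

theorem hom_ext {H : Type*} [Group H] {f g : Gpqr p q r →* H}
    (h : ∀ k, f (gen k) = g (gen k)) : f = g := by
  refine PresentedGroup.ext fun o => ?_
  cases o with
  | some k => exact h k
  | none =>
    change f omega = g omega
    simp only [omega_eq_prod, map_list_prod, List.map_map, Function.comp_def, h]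

theorem commute_omega_gen_of_coprime (hqr : (q / p.gcd q).Coprime r) (k : ℤ) :
    Commute (omega : Gpqr p q r) (gen k) := by
  obtain ⟨c, hc⟩ : q ∣ q / p.gcd q * p := by
    rw [← Nat.mul_div_right_comm (Nat.gcd_dvd_right p q), mul_comm]
    exact Nat.dvd_lcm_right p q
  have hperiod : (gen (k + (q / p.gcd q) • (p : ℤ)) : Gpqr p q r) = gen k := by
    rw [nsmul_eq_mul, ← Nat.cast_mul, hc, mul_comm, Nat.cast_mul]
    exact gen_periodic.nat_mul c k
  have hshift : SemiconjBy ((omega : Gpqr p q r) ^ (q / p.gcd q)) (gen k) _ :=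
    semiconjBy_pow_shift semiconjBy_omega_gen _ k
  rw [hperiod] at hshift
  exact commute_of_coprime_of_commute_pow hqr omega_pow hshift

theorem gen_periodic_of_coprime (hqr : (q / p.gcd q).Coprime r) :
    Function.Periodic (gen : ℤ → Gpqr p q r) p := fun k =>
  mul_right_cancel ((semiconjBy_omega_gen k).eq.symm.trans (commute_omega_gen_of_coprime hqr k).eq)

theorem gen_one_mul_gen_zero : (gen 1 * gen 0 : Gpqr 2 q r) = omega := by
  simp [omega_eq_prod, List.range_succ]

theorem gen_eq_of_even (hqr : (q / Nat.gcd 2 q).Coprime r) {k : ℤ} (hk : Even k) :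
    (gen k : Gpqr 2 q r) = gen 0 := by
  obtain ⟨j, rfl⟩ := hk.exists_two_nsmul
  simpa [mul_comm] using (gen_periodic_of_coprime hqr).int_mul_eq j

theorem gen_eq_of_odd (hqr : (q / Nat.gcd 2 q).Coprime r) {k : ℤ} (hk : Odd k) :
    (gen k : Gpqr 2 q r) = (gen 0)⁻¹ * omega := by
  obtain ⟨j, rfl⟩ := hk
  have hone : (gen (2 * j + 1) : Gpqr 2 q r) = gen 1 := by
    simpa [add_comm, mul_comm] using (gen_periodic_of_coprime hqr).int_mul j 1
  rw [hone, ← (commute_omega_gen_of_coprime hqr 0).inv_right.eq, ← gen_one_mul_gen_zero,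
    mul_inv_cancel_right]

/-- The image of `a_k` under the isomorphism of `G(2;q;r)` with `ℤ × ℤ/rℤ`, in which `a_0` goes to
`(1, 0)` and `ω` to `(0, 1)`. -/
def genImage (r : ℕ) (k : ℤ) : Multiplicative (ℤ × ZMod r) :=
  .ofAdd (if Even k then (1, 0) else (-1, 1))

theorem genImage_periodic {n : ℤ} (hn : Even n) : Function.Periodic (genImage r) n := fun k => by
  simp [genImage, Int.even_add, hn]

/-- The homomorphism from `G(2;q;r)` to the multiplicative form of `ℤ × ℤ/rℤ` that sends `a_0` to
`(1, 0)` and `ω` to `(0, 1)`. -/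
def toIntProdZMod (r : ℕ) (hq : Even q) : Gpqr 2 q r →* Multiplicative (ℤ × ZMod r) :=
  lift (a := genImage r) (w := .ofAdd (0, 1))
    (by simp [List.range_succ, genImage, ← ofAdd_add])
    (genImage_periodic (mod_cast hq))
    (fun k => by rw [Nat.cast_two, genImage_periodic even_two k]; exact Commute.all _ _)
    (by simp [← ofAdd_nsmul])

section Inverse

variable (hq : Even q) (hqr : (q / Nat.gcd 2 q).Coprime r)

@[simp]
theorem toIntProdZMod_gen (k : ℤ) : toIntProdZMod r hq (gen k) = genImage r k :=
  lift_gen ..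

@[simp]
theorem toIntProdZMod_omega : toIntProdZMod r hq omega = .ofAdd (0, 1) :=
  lift_omega ..

/-- The homomorphism from the multiplicative form of `ℤ × ℤ/rℤ` to `G(2;q;r)` that sends `(1, 0)`
to `a_0` and `(0, 1)` to `ω`. -/
def ofIntProdZMod : Multiplicative (ℤ × ZMod r) →* Gpqr 2 q r :=
  intProdZModHom (commute_omega_gen_of_coprime hqr 0).symm omega_pow

theorem ofIntProdZMod_apply (n k : ℤ) :
    ofIntProdZMod hqr (.ofAdd (n, (k : ZMod r))) = gen 0 ^ n * omega ^ k :=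
  intProdZModHom_apply ..

theorem ofIntProdZMod_genImage (k : ℤ) : ofIntProdZMod hqr (genImage r k) = gen k := by
  rcases Int.even_or_odd k with hk | hk
  · simpa [genImage, hk, gen_eq_of_even hqr hk] using ofIntProdZMod_apply hqr 1 0
  · simpa [genImage, Int.not_even_iff_odd.mpr hk, gen_eq_of_odd hqr hk] using
      ofIntProdZMod_apply hqr (-1) 1

theorem ofIntProdZMod_comp_toIntProdZMod :
    (ofIntProdZMod hqr).comp (toIntProdZMod r hq) = .id _ :=
  hom_ext fun k => by simp [ofIntProdZMod_genImage]

theorem toIntProdZMod_comp_ofIntProdZMod :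
    (toIntProdZMod r hq).comp (ofIntProdZMod hqr) = .id _ := by
  refine MonoidHom.ext fun y => ?_
  obtain ⟨⟨n, k⟩, rfl⟩ := Multiplicative.ofAdd.surjective y
  obtain ⟨k, rfl⟩ := ZMod.intCast_surjective k
  simp [ofIntProdZMod_apply, genImage, ← ofAdd_zsmul, ← ofAdd_add]

end Inverse

end Gpqr

/-- If `q` is even (so that `gcd(2,q) = 2`) and `gcd(q/2,r) = 1`, then `G(2;q;r)` is
isomorphic to `ℤ × ℤ/rℤ`. -/
theorem stmt_14 (q r : ℕ) (hq : 0 < q) (hr : 0 < r) (heven : Even q)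
    (hco : Nat.gcd (q / 2) r = 1) :
    Nonempty (Gpqr 2 q r ≃* Multiplicative (ℤ × ZMod r)) := by
  have hqr : (q / Nat.gcd 2 q).Coprime r := by rwa [Nat.gcd_eq_left heven.two_dvd]
  exact ⟨(Gpqr.toIntProdZMod r heven).toMulEquiv (Gpqr.ofIntProdZMod hqr)
    (Gpqr.ofIntProdZMod_comp_toIntProdZMod heven hqr)
    (Gpqr.toIntProdZMod_comp_ofIntProdZMod heven hqr)⟩
end
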